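/- arXiv:1605.09057 — 2 statements merged into one kernel-verified Lean document; each statement's English description precedes it below -/
import Mathlib

section
/- (Hilbert Basis Theorem for skew PBW extensions) Let A be a bijective skew PBW extension of a ring R with variables x_1,…,x_n. If R is left (respectively right) noetherian, then A is left (respectively right) noetherian. -/
/-- A *skew PBW extension* of a ring `R` inside a ring `A`, with variables `x 0, …, x (n-1)`. -/
structure SkewPBWExtension (R A : Type*) [Ring R] [Ring A] (n : ℕ) (x : Fin n → A) where
  ι : R →+* A
  ι_injective : Function.Injective ι
  basis : ∀ a : A, ∃! c : (Fin n → ℕ) →₀ R,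
    a = c.sum fun α r => ι r * (List.ofFn fun i => x i ^ α i).prod
  cond3 : ∀ (i : Fin n) (r : R), r ≠ 0 →
    ∃ c : R, c ≠ 0 ∧ ∃ r' : R, x i * ι r = ι c * x i + ι r'
  cond4 : ∀ i j : Fin n, ∃ c : R, c ≠ 0 ∧
    ∃ (r0 : R) (r' : Fin n → R), x j * x i = ι c * (x i * x j) + ι r0 + ∑ k, ι (r' k) * x k

/-- The skew PBW extension is *bijective*: each `σᵢ` is bijective (we ask for ring
automorphisms `σᵢ` with associated `σᵢ`-derivations `δᵢ` realizing `xᵢ r = σᵢ(r) xᵢ + δᵢ(r)`),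
and each constant `c_{i,j}` for `i < j` is invertible. -/
def SkewPBWExtension.IsBijective {R A : Type*} [Ring R] [Ring A] {n : ℕ} {x : Fin n → A}
    (E : SkewPBWExtension R A n x) : Prop :=
  (∀ i : Fin n, ∃ (σ : R ≃+* R) (δ : R → R),
      ∀ r : R, x i * E.ι r = E.ι (σ r) * x i + E.ι (δ r)) ∧
  (∀ i j : Fin n, i < j → ∃ c : Rˣ, ∃ (r0 : R) (r' : Fin n → R),
      x j * x i = E.ι c * (x i * x j) + E.ι r0 + ∑ k, E.ι (r' k) * x k)

section LeadingCoefficients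

variable {R A Γ : Type*} [Ring R] [Ring A]

/-- The left ideal of `R` formed by the leading coefficients, written on the right of the
monomial `m α`, of the elements of a left ideal `I`, where `F α` is the group of elements that are
smaller than `m α`. -/
def leadingCoeffIdeal (ι : R →+* A) (m : Γ → A) (F : Γ → AddSubgroup A)
    (hleft : ∀ α r, ∀ a ∈ F α, ι r * a ∈ F α) (hright : ∀ α r, ∀ a ∈ F α, a * ι r ∈ F α)
    (hcomm : ∀ α s, ∃ s', ι s' * m α - m α * ι s ∈ F α) (I : Ideal A) (α : Γ) : Ideal R where
  carrier := {r | ∃ f ∈ I, f - m α * ι r ∈ F α}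
  zero_mem' := ⟨0, I.zero_mem, by simp [(F α).zero_mem]⟩
  add_mem' := by
    rintro r s ⟨f, hf, hfr⟩ ⟨g, hg, hgs⟩
    refine ⟨f + g, I.add_mem hf hg, ?_⟩
    convert! (F α).add_mem hfr hgs using 1
    rw [map_add]; noncomm_ring
  smul_mem' := by
    rintro s r ⟨f, hf, hfr⟩
    obtain ⟨s', hs'⟩ := hcomm α s
    refine ⟨ι s' * f, I.mul_mem_left _ hf, ?_⟩
    convert! (F α).add_mem (hleft α s' _ hfr) (hright α r _ hs') using 1
    rw [smul_eq_mul, map_mul]; noncomm_ring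

/-- A ring `A` filtered by a family of monomials `m` over a well-quasi-order, with elements
`F α` smaller than `m α`, is left noetherian if the ring of coefficients is. -/
theorem isNoetherianRing_of_monomials [Preorder Γ] [WellQuasiOrderedLE Γ]
    (ι : R →+* A) (m : Γ → A) (F : Γ → AddSubgroup A) {lt : Γ → Γ → Prop} (hwf : WellFounded lt)
    (hlead : ∀ a, a = 0 ∨ ∃ β r, a - m β * ι r ∈ F β)
    (hleadF : ∀ α, ∀ a ∈ F α, a = 0 ∨ ∃ β r, lt β α ∧ a - m β * ι r ∈ F β)
    (hleft : ∀ α r, ∀ a ∈ F α, ι r * a ∈ F α) (hright : ∀ α r, ∀ a ∈ F α, a * ι r ∈ F α)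
    (hcomm : ∀ α s, ∃ s', ι s' * m α - m α * ι s ∈ F α)
    (hdvd : ∀ α β, α ≤ β → ∃ a, a * m α - m β ∈ F β ∧ ∀ b ∈ F α, a * b ∈ F β)
    [IsNoetherianRing R] : IsNoetherianRing A := by
  let L := leadingCoeffIdeal ι m F hleft hright hcomm
  have mono_left {I J : Ideal A} (h : I ≤ J) (α : Γ) : L I α ≤ L J α := by
    rintro r ⟨f, hf, hfr⟩
    exact ⟨f, h hf, hfr⟩
  have mono_right (I : Ideal A) {α β : Γ} (h : α ≤ β) : L I α ≤ L I β := by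
    rintro r ⟨f, hf, hfr⟩
    obtain ⟨a, ha, haF⟩ := hdvd α β h
    refine ⟨a * f, I.mul_mem_left _ hf, ?_⟩
    convert! (F β).add_mem (haF _ hfr) (hright β r _ ha) using 1
    noncomm_ring
  have eq_of_le {I J : Ideal A} (h : I ≤ J) (hL : ∀ α, L J α ≤ L I α) : J ≤ I := by
    have key (β : Γ) : ∀ a ∈ J, ∀ r, a - m β * ι r ∈ F β → a ∈ I := by
      induction β using hwf.induction with
      | _ β ih =>
        intro a ha r har
        obtain ⟨b, hb, hbr⟩ := hL β ⟨a, ha, har⟩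
        have hab : a - b ∈ F β := by
          convert! (F β).sub_mem har hbr using 1
          noncomm_ring
        have hI : a - b ∈ I := by
          rcases hleadF β _ hab with h0 | ⟨γ, s, hγ, hs⟩
          · rw [h0]; exact I.zero_mem
          · exact ih γ hγ _ (J.sub_mem ha (h hb)) s hs
        simpa using I.add_mem hI hb
    intro a ha
    rcases hlead a with h0 | ⟨β, r, hr⟩
    · rw [h0]; exact I.zero_mem
    · exact key β a ha r hr
  rw [IsNoetherianRing, isNoetherian_iff']
  refine ⟨wellFounded_iff_isEmpty_descending_chain.2 ⟨fun ⟨I, hI⟩ => ?_⟩⟩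
  have hmono : StrictMono I := strictMono_nat_of_lt_succ hI
  have hex (k : ℕ) : ∃ α, ¬ L (I (k + 1)) α ≤ L (I k) α := by
    by_contra! h
    exact (hI k).not_ge (eq_of_le (hI k).le h)
  choose α hα using hex
  obtain ⟨g, hg⟩ := (wellQuasiOrdered_le (α := Γ)).exists_monotone_subseq α
  refine not_strictMono_of_wellFoundedGT (fun k => L (I (g k)) (α (g k)))
    (strictMono_nat_of_lt_succ fun k => ?_)
  have hlt : L (I (g k)) (α (g k)) < L (I (g k + 1)) (α (g k)) :=
    lt_of_le_not_ge (mono_left (hI _).le _) (hα _)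
  exact hlt.trans_le <| (mono_left (hmono.monotone (g.strictMono k.lt_succ_self)) _).trans
    (mono_right _ (hg _ _ k.le_succ))

end LeadingCoefficients

section Words

variable {R A X : Type*} [Ring R] [Ring A]

/-- The additive group generated by the products `r * x₁ ⋯ xₖ` of a coefficient and a word
`[x₁, …, xₖ]` belonging to `S`. -/
def wordSpan (ι : R →+* A) (x : X → A) (S : Set (List X)) : AddSubgroup A :=
  AddSubgroup.closure {a | ∃ r, ∃ w ∈ S, a = ι r * (w.map x).prod}

/-- The span of the words of length less than `d`. -/
abbrev lengthSpan (ι : R →+* A) (x : X → A) (d : ℕ) : AddSubgroup A :=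
  wordSpan ι x {w | w.length < d}

variable {ι : R →+* A} {x : X → A} {S T : Set (List X)}

theorem mul_word_mem_wordSpan (r : R) {w : List X} (hw : w ∈ S) :
    ι r * (w.map x).prod ∈ wordSpan ι x S :=
  AddSubgroup.subset_closure ⟨r, w, hw, rfl⟩

theorem word_mem_wordSpan {w : List X} (hw : w ∈ S) : (w.map x).prod ∈ wordSpan ι x S := by
  simpa using mul_word_mem_wordSpan (ι := ι) (x := x) 1 hw

theorem wordSpan_mono (h : S ⊆ T) : wordSpan ι x S ≤ wordSpan ι x T := by
  refine AddSubgroup.closure_mono ?_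
  rintro _ ⟨r, w, hw, rfl⟩
  exact ⟨r, w, h hw, rfl⟩

theorem map_mem_of_mem_wordSpan (f : A →+ A) {G : AddSubgroup A}
    (h : ∀ r, ∀ w ∈ S, f (ι r * (w.map x).prod) ∈ G) {a : A} (ha : a ∈ wordSpan ι x S) :
    f a ∈ G := by
  have : wordSpan ι x S ≤ G.comap f := by
    refine (AddSubgroup.closure_le _).2 ?_
    rintro _ ⟨r, w, hw, rfl⟩
    exact h r w hw
  exact this ha

theorem coeff_mul_mem_wordSpan (s : R) {a : A} (ha : a ∈ wordSpan ι x S) :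
    ι s * a ∈ wordSpan ι x S := by
  refine map_mem_of_mem_wordSpan (AddMonoidHom.mulLeft (ι s)) (fun r w hw => ?_) ha
  simpa [mul_assoc] using mul_word_mem_wordSpan (ι := ι) (x := x) (s * r) hw

theorem mul_word_mem_of_mem_wordSpan (v : List X) (h : ∀ w ∈ S, w ++ v ∈ T) {a : A}
    (ha : a ∈ wordSpan ι x S) : a * (v.map x).prod ∈ wordSpan ι x T := by
  refine map_mem_of_mem_wordSpan (AddMonoidHom.mulRight (v.map x).prod) (fun r w hw => ?_) ha
  simpa [mul_assoc] using mul_word_mem_wordSpan (ι := ι) (x := x) r (h w hw)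

theorem mul_word_mem_lengthSpan (v : List X) {d : ℕ} {a : A} (ha : a ∈ lengthSpan ι x d) :
    a * (v.map x).prod ∈ lengthSpan ι x (d + v.length) :=
  mul_word_mem_of_mem_wordSpan v (fun w hw => by simpa using hw) ha

section Commutation

variable {σ : X → R ≃+* R} {δ : X → R → R}
  (hσ : ∀ i r, x i * ι r = ι (σ i r) * x i + ι (δ i r))

include hσ

theorem var_mul_mem_lengthSpan (i : X) {d : ℕ} {a : A} (ha : a ∈ lengthSpan ι x d) :
    x i * a ∈ lengthSpan ι x (d + 1) := by
  refine map_mem_of_mem_wordSpan (AddMonoidHom.mulLeft (x i)) (fun r w hw => ?_) ha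
  have h1 := mul_word_mem_wordSpan (ι := ι) (x := x) (S := {w | w.length < d + 1}) (σ i r)
    (w := i :: w) (by simpa using hw)
  have h2 := mul_word_mem_wordSpan (ι := ι) (x := x) (S := {w | w.length < d + 1}) (δ i r)
    (w := w) (lt_trans hw d.lt_succ_self)
  convert! add_mem h1 h2 using 1
  simp [← mul_assoc, hσ, add_mul]

/-- Moving a coefficient from the right of a word to its left. -/
theorem exists_word_mul_coeff (w : List X) :
    ∃ τ : R ≃+* R, ∀ r,
      (w.map x).prod * ι r - ι (τ r) * (w.map x).prod ∈ lengthSpan ι x w.length := by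
  induction w with
  | nil => exact ⟨RingEquiv.refl R, fun r => by simp [zero_mem]⟩
  | cons i w ih =>
    obtain ⟨τ, hτ⟩ := ih
    refine ⟨τ.trans (σ i), fun r => ?_⟩
    have h1 := var_mul_mem_lengthSpan hσ i (hτ r)
    have h2 := mul_word_mem_wordSpan (ι := ι) (x := x) (S := {v | v.length < w.length + 1})
      (δ i (τ r)) (w := w) w.length.lt_succ_self
    convert! add_mem h1 h2 using 1
    have := hσ i (τ r)
    simp only [List.map_cons, List.prod_cons, RingEquiv.coe_trans, Function.comp_apply]
    rw [mul_sub, ← mul_assoc (x i) (ι _), this]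
    noncomm_ring

theorem mul_coeff_mem_wordSpan (h : ∀ w ∈ S, ∀ v : List X, v.length < w.length → v ∈ S)
    (s : R) {a : A} (ha : a ∈ wordSpan ι x S) : a * ι s ∈ wordSpan ι x S := by
  refine map_mem_of_mem_wordSpan (AddMonoidHom.mulRight (ι s)) (fun r w hw => ?_) ha
  obtain ⟨τ, hτ⟩ := exists_word_mul_coeff hσ w
  have h1 := wordSpan_mono (T := S) (fun v hv => h w hw v hv) (hτ s)
  have h2 := mul_word_mem_wordSpan (ι := ι) (x := x) (τ s) hw
  have h3 := coeff_mul_mem_wordSpan r (add_mem h1 h2)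
  simpa [mul_assoc] using h3

theorem word_mul_mem_of_mem_wordSpan (v : List X)
    (h : ∀ w ∈ S, ∀ u : List X, u.length < v.length + w.length → u ∈ T)
    (h' : ∀ w ∈ S, v ++ w ∈ T) {a : A} (ha : a ∈ wordSpan ι x S) :
    (v.map x).prod * a ∈ wordSpan ι x T := by
  refine map_mem_of_mem_wordSpan (AddMonoidHom.mulLeft (v.map x).prod) (fun r w hw => ?_) ha
  obtain ⟨τ, hτ⟩ := exists_word_mul_coeff hσ v
  have h1 := wordSpan_mono (T := T) (fun u hu => h w hw u hu) (mul_word_mem_lengthSpan w (hτ r))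
  have h2 := mul_word_mem_wordSpan (ι := ι) (x := x) (τ r) (h' w hw)
  convert! add_mem h1 h2 using 1
  simp only [AddMonoidHom.coe_mulLeft, List.map_append, List.prod_append]
  noncomm_ring

/-- Permuting the letters of a word only introduces a unit, up to shorter words. -/
theorem exists_unit_of_perm
    (hswap : ∀ i j, ∃ c : Rˣ, x j * x i - ι c * (x i * x j) ∈ lengthSpan ι x 2)
    {v w : List X} (h : v.Perm w) :
    ∃ c : Rˣ, (v.map x).prod - ι c * (w.map x).prod ∈ lengthSpan ι x v.length := by
  induction h with
  | nil => exact ⟨1, by simp [zero_mem]⟩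
  | @cons i v w _ ih =>
    obtain ⟨c, hc⟩ := ih
    rename_i hp
    refine ⟨Units.map (σ i : R →* R) c, ?_⟩
    have h1 := var_mul_mem_lengthSpan hσ i hc
    have h2 := mul_word_mem_wordSpan (ι := ι) (x := x) (S := {u | u.length < v.length + 1})
      (δ i c) (w := w) (hp.length_eq ▸ v.length.lt_succ_self)
    convert! add_mem h1 h2 using 1
    have := hσ i c
    simp only [List.map_cons, List.prod_cons, Units.coe_map, MonoidHom.coe_coe]
    rw [mul_sub, ← mul_assoc (x i) (ι _), this]
    noncomm_ring
  | swap i j w =>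
    obtain ⟨c, hc⟩ := hswap i j
    refine ⟨c, ?_⟩
    have h1 := mul_word_mem_lengthSpan w hc
    convert! h1 using 1
    · rw [List.length_cons, List.length_cons, add_comm 2, add_assoc]
    · simp only [List.map_cons, List.prod_cons]
      noncomm_ring
  | @trans u v w h₁ _ ih₁ ih₂ =>
    obtain ⟨c, hc⟩ := ih₁
    obtain ⟨d, hd⟩ := ih₂
    refine ⟨c * d, ?_⟩
    rw [← h₁.length_eq] at hd
    have h1 := coeff_mul_mem_wordSpan (c : R) hd
    convert! add_mem hc h1 using 1
    rw [Units.val_mul, map_mul]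
    noncomm_ring

end Commutation

end Words

section DegLex

variable {n : ℕ}

/-- The degree lexicographic rank of an exponent. -/
def degLexKey (α : Fin n → ℕ) : ℕ ×ₗ Lex (Fin n → ℕ) :=
  toLex (∑ i, α i, toLex α)

theorem degLexKey_lt_iff {α β : Fin n → ℕ} : degLexKey α < degLexKey β ↔
    ∑ i, α i < ∑ i, β i ∨ ∑ i, α i = ∑ i, β i ∧ toLex α < toLex β :=
  Prod.Lex.toLex_lt_toLex

theorem degLexKey_injective : Function.Injective (degLexKey (n := n)) := fun _ _ h =>
  toLex.injective (Prod.ext_iff.1 (toLex.injective h)).2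

theorem degLexKey_add_lt_add_left {α β : Fin n → ℕ} (h : degLexKey α < degLexKey β)
    (γ : Fin n → ℕ) : degLexKey (γ + α) < degLexKey (γ + β) := by
  rw [degLexKey_lt_iff] at h ⊢
  simp only [Pi.add_apply, Finset.sum_add_distrib]
  refine h.imp (fun h => by lia) (fun ⟨h, h'⟩ => ⟨by lia, ?_⟩)
  exact add_lt_add_right h' (toLex γ)

/-- The exponent of a word, counting its letters. -/
def exponent (w : List (Fin n)) : Fin n → ℕ := fun i => w.count i

theorem exponent_append (v w : List (Fin n)) : exponent (v ++ w) = exponent v + exponent w := by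
  ext i
  simp [exponent]

theorem sum_exponent (w : List (Fin n)) : ∑ i, exponent w i = w.length := by
  simpa [exponent] using Multiset.sum_count_eq_card (s := Finset.univ) (m := (w : Multiset (Fin n)))
    (by simp)

theorem degLexKey_exponent_lt {v w : List (Fin n)} (h : v.length < w.length) :
    degLexKey (exponent v) < degLexKey (exponent w) := by
  rw [degLexKey_lt_iff, sum_exponent, sum_exponent]
  exact Or.inl h

theorem perm_of_exponent_eq {v w : List (Fin n)} (h : exponent v = exponent w) : v.Perm w :=
  List.perm_iff_count.2 (congrFun h)

/-- The increasing word with a given exponent. -/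
def standardWord (α : Fin n → ℕ) : List (Fin n) :=
  (List.ofFn fun i => List.replicate (α i) i).flatten

theorem exponent_standardWord (α : Fin n → ℕ) : exponent (standardWord α) = α := by
  ext i
  simp only [exponent, standardWord, List.count_flatten, List.map_ofFn, List.sum_ofFn]
  simp [List.count_replicate]

theorem prod_map_standardWord {A : Type*} [Monoid A] (x : Fin n → A) (α : Fin n → ℕ) :
    ((standardWord α).map x).prod = (List.ofFn fun i => x i ^ α i).prod := by
  simp [standardWord, List.map_flatten, List.prod_flatten, List.map_ofFn, Function.comp_def]

variable {R A : Type*} [Ring R] [Ring A]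

/-- The span of the words whose exponent is smaller than `α` in the degree lexicographic order. -/
abbrev degLexSpan (ι : R →+* A) (x : Fin n → A) (α : Fin n → ℕ) : AddSubgroup A :=
  wordSpan ι x {w | degLexKey (exponent w) < degLexKey α}

variable {ι : R →+* A} {x : Fin n → A}

theorem lengthSpan_le_degLexSpan (w : List (Fin n)) :
    lengthSpan ι x w.length ≤ degLexSpan ι x (exponent w) :=
  wordSpan_mono fun _ => degLexKey_exponent_lt

theorem degLexSpan_mono {α β : Fin n → ℕ} (h : degLexKey α ≤ degLexKey β) :
    degLexSpan ι x α ≤ degLexSpan ι x β :=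
  wordSpan_mono fun _ hw => lt_of_lt_of_le hw h

theorem degLexSpan_mul_coeff {σ : Fin n → R ≃+* R} {δ : Fin n → R → R}
    (hσ : ∀ i r, x i * ι r = ι (σ i r) * x i + ι (δ i r)) (α : Fin n → ℕ) (r : R) {a : A}
    (ha : a ∈ degLexSpan ι x α) : a * ι r ∈ degLexSpan ι x α :=
  mul_coeff_mem_wordSpan hσ (fun _ hw _ hv => (degLexKey_exponent_lt hv).trans hw) r ha

theorem degLexSpan_mul_word {α : Fin n → ℕ} (γ : Fin n → ℕ) {a : A}
    (ha : a ∈ degLexSpan ι x α) :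
    a * ((standardWord γ).map x).prod ∈ degLexSpan ι x (γ + α) :=
  mul_word_mem_of_mem_wordSpan _ (fun w hw => by
    rw [Set.mem_ofPred_eq, exponent_append, add_comm, exponent_standardWord]
    exact degLexKey_add_lt_add_left hw γ) ha

theorem word_mul_degLexSpan {σ : Fin n → R ≃+* R} {δ : Fin n → R → R}
    (hσ : ∀ i r, x i * ι r = ι (σ i r) * x i + ι (δ i r)) {α : Fin n → ℕ} (γ : Fin n → ℕ) {a : A}
    (ha : a ∈ degLexSpan ι x α) :
    ((standardWord γ).map x).prod * a ∈ degLexSpan ι x (γ + α) := by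
  have key (w : List (Fin n)) (hw : degLexKey (exponent w) < degLexKey α) :
      degLexKey (exponent (standardWord γ ++ w)) < degLexKey (γ + α) := by
    rw [exponent_append, exponent_standardWord]
    exact degLexKey_add_lt_add_left hw γ
  refine word_mul_mem_of_mem_wordSpan hσ _ (fun w hw u hu => ?_) key ha
  exact (degLexKey_exponent_lt (by simpa using hu)).trans (key w hw)

theorem standardWord_mul_coeff {σ : Fin n → R ≃+* R} {δ : Fin n → R → R}
    (hσ : ∀ i r, x i * ι r = ι (σ i r) * x i + ι (δ i r)) (α : Fin n → ℕ) :
    ∃ τ : R ≃+* R, ∀ r, ((standardWord α).map x).prod * ι r -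
      ι (τ r) * ((standardWord α).map x).prod ∈ degLexSpan ι x α := by
  obtain ⟨τ, hτ⟩ := exists_word_mul_coeff hσ (standardWord α)
  refine ⟨τ, fun r => ?_⟩
  have := lengthSpan_le_degLexSpan _ (hτ r)
  rwa [exponent_standardWord] at this

variable {σ : Fin n → R ≃+* R} {δ : Fin n → R → R}
  (hσ : ∀ i r, x i * ι r = ι (σ i r) * x i + ι (δ i r))
  (hswap : ∀ i j, ∃ c : Rˣ, x j * x i - ι c * (x i * x j) ∈ lengthSpan ι x 2)

include hσ hswap

/-- Every word is a unit multiple of the standard monomial with the same exponent, up to smaller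
words. -/
theorem exists_unit_standardWord (w : List (Fin n)) :
    ∃ c : Rˣ, (w.map x).prod - ι c * ((standardWord (exponent w)).map x).prod ∈
      degLexSpan ι x (exponent w) := by
  obtain ⟨c, hc⟩ := exists_unit_of_perm hσ hswap
    (perm_of_exponent_eq (exponent_standardWord (exponent w)).symm)
  exact ⟨c, lengthSpan_le_degLexSpan w hc⟩

theorem exists_unit_standardWord_mul (α β : Fin n → ℕ) :
    ∃ c : Rˣ, ((standardWord α).map x).prod * ((standardWord β).map x).prod -
      ι c * ((standardWord (α + β)).map x).prod ∈ degLexSpan ι x (α + β) := by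
  simpa [exponent_append, exponent_standardWord] using
    exists_unit_standardWord hσ hswap (standardWord α ++ standardWord β)

/-- Every nonzero combination of words has a leading term. -/
theorem exists_leading_term {S : Set (Fin n → ℕ)} {a : A}
    (ha : a ∈ wordSpan ι x {w | exponent w ∈ S}) :
    a = 0 ∨ ∃ β r, β ∈ S ∧ a - ι r * ((standardWord β).map x).prod ∈ degLexSpan ι x β := by
  have add_of_lt {a b : A} {β γ : Fin n → ℕ} {r s : R} (h : degLexKey β < degLexKey γ)
      (ha : a - ι r * ((standardWord β).map x).prod ∈ degLexSpan ι x β)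
      (hb : b - ι s * ((standardWord γ).map x).prod ∈ degLexSpan ι x γ) :
      a + b - ι s * ((standardWord γ).map x).prod ∈ degLexSpan ι x γ := by
    have h1 : ι r * ((standardWord β).map x).prod ∈ degLexSpan ι x γ :=
      mul_word_mem_wordSpan r (by simpa [exponent_standardWord] using h)
    convert! add_mem (add_mem (degLexSpan_mono h.le ha) h1) hb using 1
    noncomm_ring
  refine AddSubgroup.closure_induction ?_ (Or.inl rfl) ?_ ?_ ha
  · rintro _ ⟨r, w, hw, rfl⟩
    obtain ⟨c, hc⟩ := exists_unit_standardWord hσ hswap w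
    refine Or.inr ⟨exponent w, r * c, hw, ?_⟩
    convert! coeff_mul_mem_wordSpan r hc using 1
    rw [map_mul]
    noncomm_ring
  · rintro a b - - (rfl | ⟨β, r, hβ, ha⟩) hb
    · simpa using hb
    rcases hb with rfl | ⟨γ, s, hγ, hb⟩
    · exact Or.inr ⟨β, r, hβ, by simpa using ha⟩
    right
    rcases lt_trichotomy (degLexKey β) (degLexKey γ) with h | h | h
    · exact ⟨γ, s, hγ, add_of_lt h ha hb⟩
    · obtain rfl := degLexKey_injective h
      refine ⟨β, r + s, hβ, ?_⟩
      convert! add_mem ha hb using 1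
      rw [map_add]
      noncomm_ring
    · refine ⟨β, r, hβ, ?_⟩
      rw [add_comm]
      exact add_of_lt h hb ha
  · rintro a - (rfl | ⟨β, r, hβ, ha⟩)
    · simp
    · refine Or.inr ⟨β, -r, hβ, ?_⟩
      convert! neg_mem ha using 1
      rw [map_neg]
      noncomm_ring

theorem isNoetherianRing_of_wordSpan_eq_top (htop : ∀ a, a ∈ wordSpan ι x Set.univ)
    [IsNoetherianRing R] : IsNoetherianRing A := by
  have move (β : Fin n → ℕ) (r : R) (a : A)
      (h : a - ι r * ((standardWord β).map x).prod ∈ degLexSpan ι x β) :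
      ∃ s, a - ((standardWord β).map x).prod * ι s ∈ degLexSpan ι x β := by
    obtain ⟨τ, hτ⟩ := standardWord_mul_coeff hσ β
    refine ⟨τ.symm r, ?_⟩
    simpa using sub_mem h (hτ (τ.symm r))
  refine isNoetherianRing_of_monomials ι (fun α => ((standardWord α).map x).prod)
    (degLexSpan ι x) (InvImage.wf degLexKey wellFounded_lt) (fun a => ?_) (fun α a ha => ?_)
    (fun _ r _ ha => coeff_mul_mem_wordSpan r ha) (fun α r _ ha => degLexSpan_mul_coeff hσ α r ha)
    (fun α s => ?_) (fun α β hαβ => ?_)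
  · refine (exists_leading_term hσ hswap (S := Set.univ) (htop a)).imp_right ?_
    rintro ⟨β, r, -, h⟩
    exact ⟨β, move β r a h⟩
  · refine (exists_leading_term hσ hswap (S := {β | degLexKey β < degLexKey α}) ha).imp_right ?_
    rintro ⟨β, r, hβ, h⟩
    obtain ⟨s, hs⟩ := move β r a h
    exact ⟨β, s, hβ, hs⟩
  · obtain ⟨τ, hτ⟩ := standardWord_mul_coeff hσ α
    refine ⟨τ s, ?_⟩
    simpa using neg_mem (hτ s)
  · obtain ⟨γ, rfl⟩ := exists_add_of_le hαβ
    rw [add_comm α γ]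
    obtain ⟨c, hc⟩ := exists_unit_standardWord_mul hσ hswap γ α
    refine ⟨ι ↑c⁻¹ * ((standardWord γ).map x).prod, ?_, fun b hb => ?_⟩
    · have h1 := coeff_mul_mem_wordSpan (↑c⁻¹ : R) hc
      simpa [mul_sub, ← mul_assoc, ← map_mul] using h1
    · rw [mul_assoc]
      exact coeff_mul_mem_wordSpan _ (word_mul_degLexSpan hσ γ hb)

open MulOpposite in
theorem isNoetherianRing_op_of_wordSpan_eq_top (htop : ∀ a, a ∈ wordSpan ι x Set.univ)
    [IsNoetherianRing Rᵐᵒᵖ] : IsNoetherianRing Aᵐᵒᵖ := by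
  refine isNoetherianRing_of_monomials (RingHom.op ι)
    (fun α => op ((standardWord α).map x).prod) (fun α => (degLexSpan ι x α).comap (opAddEquiv (α := A)).symm.toAddMonoidHom)
    (InvImage.wf degLexKey wellFounded_lt) (fun a => ?_) (fun α a ha => ?_)
    (fun α r _ ha => degLexSpan_mul_coeff hσ α r.unop ha)
    (fun _ r _ ha => coeff_mul_mem_wordSpan (x := x) r.unop ha)
    (fun α s => ?_) (fun α β hαβ => ?_)
  · refine (exists_leading_term hσ hswap (S := Set.univ) (htop a.unop)).imp
      (fun h => unop_injective h) ?_
    rintro ⟨β, r, -, h⟩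
    exact ⟨β, op r, h⟩
  · refine (exists_leading_term hσ hswap (S := {β | degLexKey β < degLexKey α}) ha).imp
      (fun h => unop_injective h) ?_
    rintro ⟨β, r, hβ, h⟩
    exact ⟨β, op r, hβ, h⟩
  · obtain ⟨τ, hτ⟩ := standardWord_mul_coeff hσ α
    refine ⟨op (τ.symm s.unop), ?_⟩
    simpa using hτ (τ.symm s.unop)
  · obtain ⟨γ, rfl⟩ := exists_add_of_le hαβ
    obtain ⟨c, hc⟩ := exists_unit_standardWord_mul hσ hswap α γ
    obtain ⟨τ, hτ⟩ := standardWord_mul_coeff hσ α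
    refine ⟨op (ι (τ.symm ↑c⁻¹) * ((standardWord γ).map x).prod), ?_, fun b hb => ?_⟩
    · have h1 := coeff_mul_mem_wordSpan (↑c⁻¹ : R) hc
      have h2 := degLexSpan_mul_word γ (hτ (τ.symm ↑c⁻¹))
      rw [add_comm γ α] at h2
      have h3 := add_mem h2 h1
      simpa [mul_sub, sub_mul, ← mul_assoc, ← map_mul] using h3
    · have h1 := degLexSpan_mul_word γ (degLexSpan_mul_coeff hσ α (τ.symm ↑c⁻¹) hb)
      rw [add_comm γ α] at h1
      simpa [mul_assoc] using h1

end DegLex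

theorem SkewPBWExtension.mem_wordSpan_univ {R A : Type*} [Ring R] [Ring A] {n : ℕ}
    {x : Fin n → A} (E : SkewPBWExtension R A n x) (a : A) : a ∈ wordSpan E.ι x Set.univ := by
  obtain ⟨c, hc, -⟩ := E.basis a
  rw [hc]
  refine sum_mem fun α _ => ?_
  simp only [← prod_map_standardWord]
  exact mul_word_mem_wordSpan _ (Set.mem_univ _)

theorem SkewPBWExtension.IsBijective.exists_unit_swap {R A : Type*} [Ring R] [Ring A] {n : ℕ}
    {x : Fin n → A} {E : SkewPBWExtension R A n x} (hbij : E.IsBijective) (i j : Fin n) :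
    ∃ c : Rˣ, x j * x i - E.ι c * (x i * x j) ∈ lengthSpan E.ι x 2 := by
  have key (i j : Fin n) (hij : i < j) :
      ∃ c : Rˣ, x j * x i - E.ι c * (x i * x j) ∈ lengthSpan E.ι x 2 := by
    obtain ⟨c, r₀, r, h⟩ := hbij.2 i j hij
    refine ⟨c, ?_⟩
    have h0 : E.ι r₀ ∈ lengthSpan E.ι x 2 := by
      simpa [-Order.lt_two_iff] using mul_word_mem_wordSpan (ι := E.ι) (x := x) r₀ (w := [])
        (S := {w | w.length < 2}) (by simp)
    have h1 : ∑ k, E.ι (r k) * x k ∈ lengthSpan E.ι x 2 := sum_mem fun k _ => by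
      simpa [-Order.lt_two_iff] using mul_word_mem_wordSpan (ι := E.ι) (x := x) (r k) (w := [k])
        (S := {w | w.length < 2}) (by simp)
    convert! add_mem h0 h1 using 1
    rw [h, add_assoc, add_sub_cancel_left]
  rcases lt_trichotomy i j with h | rfl | h
  · exact key i j h
  · exact ⟨1, by simp [zero_mem]⟩
  · obtain ⟨c, hc⟩ := key j i h
    refine ⟨c⁻¹, ?_⟩
    have h1 := coeff_mul_mem_wordSpan (↑c⁻¹ : R) (neg_mem hc)
    simpa [-Order.lt_two_iff, mul_sub, ← mul_assoc, ← map_mul] using h1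

/-- (Hilbert Basis Theorem) If `A` is a bijective skew PBW extension of `R` and `R` is
left (respectively right) noetherian, then `A` is left (respectively right) noetherian.
(`IsNoetherianRing` is left noetherianity; right noetherianity is left noetherianity of the
opposite ring.) -/
theorem skewPBWExtension_isNoetherianRing {R A : Type*} [Ring R] [Ring A] {n : ℕ}
    {x : Fin n → A} (E : SkewPBWExtension R A n x) (hbij : E.IsBijective) :
    (IsNoetherianRing R → IsNoetherianRing A) ∧
    (IsNoetherianRing Rᵐᵒᵖ → IsNoetherianRing Aᵐᵒᵖ) := by
  choose σ δ hσ using hbij.1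
  exact ⟨fun _ => isNoetherianRing_of_wordSpan_eq_top hσ hbij.exists_unit_swap E.mem_wordSpan_univ,
    fun _ => isNoetherianRing_op_of_wordSpan_eq_top hσ hbij.exists_unit_swap E.mem_wordSpan_univ⟩
end

section
/- Let B be a left noetherian semi-graded ring. Then the collection sgr-B of finitely generated semi-graded left B-modules, with homogeneous B-module homomorphisms as morphisms, is an abelian category: it has kernels and cokernels (the kernel and image of a homogeneous homomorphism between objects of sgr-B are semi-graded finitely generated submodules and the quotient by the image is in sgr-B), it is normal and conormal, it is additive with finite coproducts given by direct sums with componentwise semi-graduation, and composition of morphisms is bilinear. -/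
open scoped DirectSum
open CategoryTheory

/-- A ring `B` is *semi-graded (SG)*. -/
structure SemiGraded (B : Type) [Ring B] where
  comp : ℕ → AddSubgroup B
  internal : DirectSum.IsInternal comp
  mul_mem : ∀ m n : ℕ, ∀ a ∈ comp m, ∀ b ∈ comp n, a * b ∈ ⨆ k ∈ Set.Iic (m + n), comp k
  one_mem' : 1 ∈ comp 0

variable (B : Type) [Ring B] (SG : SemiGraded B)

/-- An object of the category `sgr-B`: a finitely generated semi-graded left
`B`-module `M = ⊕_{n∈ℤ} M_n` with `B_m M_n ⊆ ⊕_{k ≤ m+n} M_k`. -/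
structure SgrObj where
  carrier : Type
  [acg : AddCommGroup carrier]
  [mod : Module B carrier]
  comp : ℤ → AddSubgroup carrier
  internal : DirectSum.IsInternal comp
  smul_mem : ∀ (m : ℕ) (n : ℤ), ∀ b ∈ SG.comp m, ∀ v ∈ comp n,
    b • v ∈ ⨆ k ∈ Set.Iic ((m : ℤ) + n), comp k
  fg : Module.Finite B carrier

attribute [instance] SgrObj.acg SgrObj.mod

/-- The category `sgr-B` of finitely generated semi-graded left `B`-modules, whose
morphisms are the homogeneous `B`-homomorphisms. -/
instance sgrCategory : Category (SgrObj B SG) where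
  Hom M N := {f : M.carrier →ₗ[B] N.carrier // ∀ n : ℤ, ∀ x ∈ M.comp n, f x ∈ N.comp n}
  id M := ⟨LinearMap.id, fun n x hx => hx⟩
  comp f g := ⟨g.1.comp f.1, fun n x hx => g.2 n _ (f.2 n x hx)⟩

section GradingProjections

variable {A A' : Type*} [AddCommGroup A] [AddCommGroup A']

/-- The endomorphisms `p n` are the projections onto the components of an internal direct sum
decomposition `C` of `A`. -/
structure IsGradingProj (C : ℤ → AddSubgroup A) (p : ℤ → A →+ A) : Prop where
  mem : ∀ n x, p n x ∈ C n
  apply_of_mem : ∀ n, ∀ x ∈ C n, p n x = x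
  apply_of_ne : ∀ m n, m ≠ n → ∀ x ∈ C n, p m x = 0
  exists_sum : ∀ x, ∃ s : Finset ℤ, ∑ i ∈ s, p i x = x

variable {C : ℤ → AddSubgroup A} {p : ℤ → A →+ A} {C' : ℤ → AddSubgroup A'}

theorem IsGradingProj.isInternal (h : IsGradingProj C p) : DirectSum.IsInternal C := by
  have key : ∀ (n : ℤ) (v : ⨁ i, C i), p n (DirectSum.coeAddMonoidHom C v) = v n := by
    intro n v
    induction v using DirectSum.induction_on with
    | zero => simp
    | of i x =>
      rw [DirectSum.coeAddMonoidHom_of]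
      rcases eq_or_ne n i with rfl | hni
      · rw [h.apply_of_mem _ _ x.2, DirectSum.of_eq_same]
      · rw [h.apply_of_ne _ _ hni _ x.2, DirectSum.of_eq_of_ne _ _ _ hni]
        rfl
    | add x y hx hy => simp [hx, hy]
  refine ⟨?_, fun x => ?_⟩
  · refine (injective_iff_map_eq_zero (DirectSum.coeAddMonoidHom C)).2 fun v hv => ?_
    refine DFinsupp.ext fun n => Subtype.ext ?_
    have := key n v
    rw [hv, map_zero] at this
    exact this.symm
  · obtain ⟨s, hs⟩ := h.exists_sum x
    refine ⟨∑ i ∈ s, DirectSum.of (fun i => C i) i ⟨p i x, h.mem i x⟩, ?_⟩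
    rw [map_sum]
    simpa only [DirectSum.coeAddMonoidHom_of] using hs

theorem exists_isGradingProj (h : DirectSum.IsInternal C) :
    ∃ p : ℤ → A →+ A, IsGradingProj C p := by
  classical
  let d := h.chooseDecomposition
  refine ⟨fun n => AddMonoidHom.mk' (fun x => (DirectSum.decompose C x n : A))
    fun x y => by simp, ?_, ?_, ?_, ?_⟩
  · intro n x
    exact (DirectSum.decompose C x n).2
  · intro n x hx
    exact DirectSum.decompose_of_mem_same C hx
  · intro m n hmn x hx
    exact DirectSum.decompose_of_mem_ne C hx hmn.symm
  · intro x
    exact ⟨_, DirectSum.sum_support_decompose C x⟩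

theorem IsGradingProj.apply_eq_zero_of_mem_iSup (h : IsGradingProj C p) {S : Set ℤ} {n : ℤ}
    (hn : n ∉ S) {x : A} (hx : x ∈ ⨆ k ∈ S, C k) : p n x = 0 := by
  have : ⨆ k ∈ S, C k ≤ (p n).ker := iSup₂_le fun k hk y hy =>
    h.apply_of_ne n k (fun e => hn (e ▸ hk)) y hy
  exact this hx

theorem IsGradingProj.mem_iSup (h : IsGradingProj C p) {S : Set ℤ} {x : A}
    (hx : ∀ n ∉ S, p n x = 0) : x ∈ ⨆ k ∈ S, C k := by
  obtain ⟨s, hs⟩ := h.exists_sum x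
  rw [← hs]
  refine sum_mem fun i _ => ?_
  by_cases hi : i ∈ S
  · exact AddSubgroup.mem_iSup_of_mem i (AddSubgroup.mem_iSup_of_mem hi (h.mem i x))
  · rw [hx i hi]
    exact zero_mem _

theorem map_mem_iSup_of_map_mem {f : A →+ A'} (hf : ∀ n, ∀ x ∈ C n, f x ∈ C' n) {S : Set ℤ} {x : A}
    (hx : x ∈ ⨆ k ∈ S, C k) : f x ∈ ⨆ k ∈ S, C' k := by
  have : ⨆ k ∈ S, C k ≤ (⨆ k ∈ S, C' k).comap f := iSup₂_le fun k hk y hy =>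
    AddSubgroup.mem_iSup_of_mem k (AddSubgroup.mem_iSup_of_mem hk (hf k y hy))
  exact this hx

theorem IsGradingProj.map_apply {p' : ℤ → A' →+ A'} (h : IsGradingProj C p)
    (h' : IsGradingProj C' p') {f : A →+ A'} (hf : ∀ n, ∀ x ∈ C n, f x ∈ C' n) (n : ℤ) (x : A) :
    f (p n x) = p' n (f x) := by
  have key : ∀ i, p' n (f (p i x)) = if i = n then f (p n x) else 0 := by
    intro i
    split_ifs with hi
    · subst hi
      exact h'.apply_of_mem _ _ (hf _ _ (h.mem _ _))
    · exact h'.apply_of_ne _ _ (Ne.symm hi) _ (hf _ _ (h.mem _ _))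
  obtain ⟨s, hs⟩ := h.exists_sum x
  have hx : p' n (f x) = ∑ i ∈ s, if i = n then f (p n x) else 0 := by
    conv_lhs => rw [← hs, map_sum, map_sum]
    exact Finset.sum_congr rfl fun i _ => key i
  rw [hx, Finset.sum_ite_eq']
  split_ifs with hn
  · rfl
  · have : p n x = 0 := by
      conv_lhs => rw [← hs, map_sum]
      exact Finset.sum_eq_zero fun i hi =>
        h.apply_of_ne _ _ (by rintro rfl; exact hn hi) _ (h.mem i x)
    rw [this, map_zero]

end GradingProjections

namespace SgrObj

open Limits

variable {B SG}

/-- The projection of a semi-graded module onto its component of degree `n`. -/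
noncomputable def proj (M : SgrObj B SG) : ℤ → M.carrier →+ M.carrier :=
  (exists_isGradingProj M.internal).choose

theorem isGradingProj (M : SgrObj B SG) : IsGradingProj M.comp M.proj :=
  (exists_isGradingProj M.internal).choose_spec

/-- The `B`-linear map underlying a morphism of `sgr-B`. -/
def toLin {M N : SgrObj B SG} (f : M ⟶ N) : M.carrier →ₗ[B] N.carrier := f.1

theorem toLin_mem {M N : SgrObj B SG} (f : M ⟶ N) (n : ℤ) (x : M.carrier) (hx : x ∈ M.comp n) :
    toLin f x ∈ N.comp n := f.2 n x hx

/-- A homogeneous `B`-linear map as a morphism of `sgr-B`. -/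
def ofLin {M N : SgrObj B SG} (f : M.carrier →ₗ[B] N.carrier)
    (hf : ∀ n : ℤ, ∀ x ∈ M.comp n, f x ∈ N.comp n) : M ⟶ N := ⟨f, hf⟩

theorem hom_ext {M N : SgrObj B SG} {f g : M ⟶ N} (h : ∀ x, toLin f x = toLin g x) : f = g :=
  Subtype.ext (LinearMap.ext h)

theorem toLin_proj {M N : SgrObj B SG} (f : M ⟶ N) (n : ℤ) (x : M.carrier) :
    toLin f (M.proj n x) = N.proj n (toLin f x) :=
  M.isGradingProj.map_apply N.isGradingProj (f := (toLin f).toAddMonoidHom) (toLin_mem f) n x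

/-- The additive group of homogeneous homomorphisms. -/
def homSubgroup (M N : SgrObj B SG) : AddSubgroup (M.carrier →ₗ[B] N.carrier) where
  carrier := {f | ∀ n : ℤ, ∀ x ∈ M.comp n, f x ∈ N.comp n}
  zero_mem' _ _ _ := zero_mem _
  add_mem' hf hg n x hx := add_mem (hf n x hx) (hg n x hx)
  neg_mem' hf n x hx := neg_mem (hf n x hx)

instance homAddCommGroup (M N : SgrObj B SG) : AddCommGroup (M ⟶ N) :=
  inferInstanceAs (AddCommGroup (homSubgroup M N))

instance preadditive : Preadditive (SgrObj B SG) where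
  homGroup := homAddCommGroup
  add_comp _ _ _ f f' g := hom_ext fun x => map_add (toLin g) (toLin f x) (toLin f' x)
  comp_add _ _ _ _ _ _ := rfl

/-- A homogeneous submodule of a semi-graded module, as an object of `sgr-B`. -/
noncomputable def sub [IsNoetherianRing B] (M : SgrObj B SG) (R : Submodule B M.carrier)
    (hR : ∀ n, ∀ x ∈ R, M.proj n x ∈ R) : SgrObj B SG :=
  have hp : IsGradingProj (fun n => (M.comp n).comap R.subtype.toAddMonoidHom)
      (fun n => ((M.proj n).comp R.subtype.toAddMonoidHom).codRestrict R.toAddSubgroup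
        fun x => hR n x x.2) :=
    { mem := fun n x => M.isGradingProj.mem n x
      apply_of_mem := fun n x hx => Subtype.ext (M.isGradingProj.apply_of_mem n x hx)
      apply_of_ne := fun m n hmn x hx => Subtype.ext (M.isGradingProj.apply_of_ne m n hmn x hx)
      exists_sum := fun x => by
        obtain ⟨s, hs⟩ := M.isGradingProj.exists_sum x
        refine ⟨s, Subtype.ext ?_⟩
        rw [← R.subtype_apply, map_sum]
        exact hs }
  { carrier := R
    comp := fun n => (M.comp n).comap R.subtype.toAddMonoidHom
    internal := hp.isInternal
    smul_mem := fun m n b hb v hv => hp.mem_iSup fun k hk => Subtype.ext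
      (M.isGradingProj.apply_eq_zero_of_mem_iSup hk (M.smul_mem m n b hb v hv))
    fg := by
      have := M.fg
      infer_instance }

/-- The quotient of a semi-graded module by a homogeneous submodule, as an object of `sgr-B`. -/
noncomputable def quot (M : SgrObj B SG) (R : Submodule B M.carrier)
    (hR : ∀ n, ∀ x ∈ R, M.proj n x ∈ R) : SgrObj B SG :=
  have hp : IsGradingProj (fun n => (M.comp n).map R.mkQ.toAddMonoidHom)
      (fun n => QuotientAddGroup.map R.toAddSubgroup R.toAddSubgroup (M.proj n)
        fun x hx => hR n x hx) :=
    { mem := fun n x => by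
        obtain ⟨x, rfl⟩ := R.mkQ_surjective x
        exact ⟨M.proj n x, M.isGradingProj.mem n x, rfl⟩
      apply_of_mem := by
        rintro n _ ⟨x, hx, rfl⟩
        exact congrArg R.mkQ (M.isGradingProj.apply_of_mem n x hx)
      apply_of_ne := by
        rintro m n hmn _ ⟨x, hx, rfl⟩
        exact (congrArg R.mkQ (M.isGradingProj.apply_of_ne m n hmn x hx)).trans (map_zero _)
      exists_sum := fun x => by
        obtain ⟨x, rfl⟩ := R.mkQ_surjective x
        obtain ⟨s, hs⟩ := M.isGradingProj.exists_sum x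
        refine ⟨s, ?_⟩
        conv_rhs => rw [← hs, map_sum]
        rfl }
  { carrier := M.carrier ⧸ R
    comp := fun n => (M.comp n).map R.mkQ.toAddMonoidHom
    internal := hp.isInternal
    smul_mem := by
      rintro m n b hb _ ⟨v, hv, rfl⟩
      exact map_mem_iSup_of_map_mem (f := R.mkQ.toAddMonoidHom)
        (fun n x hx => AddSubgroup.mem_map_of_mem _ hx) (M.smul_mem m n b hb v hv)
    fg := by
      have := M.fg
      infer_instance }

/-- The direct sum of two semi-graded modules, with the componentwise semi-graduation. -/
noncomputable def prod (M N : SgrObj B SG) : SgrObj B SG :=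
  have hp : IsGradingProj (fun n => (M.comp n).prod (N.comp n))
      (fun n => (M.proj n).prodMap (N.proj n)) :=
    { mem := fun n x => ⟨M.isGradingProj.mem n x.1, N.isGradingProj.mem n x.2⟩
      apply_of_mem := fun n x hx => Prod.ext (M.isGradingProj.apply_of_mem n _ hx.1)
        (N.isGradingProj.apply_of_mem n _ hx.2)
      apply_of_ne := fun m n hmn x hx => Prod.ext (M.isGradingProj.apply_of_ne m n hmn _ hx.1)
        (N.isGradingProj.apply_of_ne m n hmn _ hx.2)
      exists_sum := fun x => by
        have extend : ∀ (P : SgrObj B SG) (y : P.carrier) (s t : Finset ℤ), s ⊆ t →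
            ∑ i ∈ s, P.proj i y = y → ∑ i ∈ t, P.proj i y = y := by
          intro P y s t hst hs
          rw [← Finset.sum_subset hst fun i _ hi => ?_]
          · exact hs
          · conv_lhs => rw [← hs, map_sum]
            exact Finset.sum_eq_zero fun j hj => P.isGradingProj.apply_of_ne _ _
              (by rintro rfl; exact hi hj) _ (P.isGradingProj.mem j y)
        obtain ⟨s, hs⟩ := M.isGradingProj.exists_sum x.1
        obtain ⟨t, ht⟩ := N.isGradingProj.exists_sum x.2
        refine ⟨s ∪ t, Prod.ext ?_ ?_⟩
        · rw [Prod.fst_sum]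
          exact extend M x.1 s _ Finset.subset_union_left hs
        · rw [Prod.snd_sum]
          exact extend N x.2 t _ Finset.subset_union_right ht }
  { carrier := M.carrier × N.carrier
    comp := fun n => (M.comp n).prod (N.comp n)
    internal := hp.isInternal
    smul_mem := fun m n b hb v hv => hp.mem_iSup fun k hk => Prod.ext
      (M.isGradingProj.apply_eq_zero_of_mem_iSup hk (M.smul_mem m n b hb _ hv.1))
      (N.isGradingProj.apply_eq_zero_of_mem_iSup hk (N.smul_mem m n b hb _ hv.2))
    fg := by
      have := M.fg
      have := N.fg
      infer_instance }

variable (B SG) in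
/-- The zero module, as an object of `sgr-B`. -/
def zeroObj : SgrObj B SG where
  carrier := PUnit
  comp _ := ⊥
  internal := IsGradingProj.isInternal (p := fun _ => 0)
    ⟨fun _ _ => zero_mem _, fun _ _ _ => rfl, fun _ _ _ _ _ => rfl, fun _ => ⟨∅, rfl⟩⟩
  smul_mem _ _ _ _ _ _ := zero_mem _
  fg := inferInstance

instance : HasZeroObject (SgrObj B SG) :=
  ⟨zeroObj B SG, (IsZero.iff_id_eq_zero _).2 (hom_ext fun _ => rfl)⟩

theorem ker_proj_mem {M N : SgrObj B SG} (f : M ⟶ N) (n : ℤ) (x : M.carrier)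
    (hx : x ∈ (toLin f).ker) : M.proj n x ∈ (toLin f).ker := by
  rw [LinearMap.mem_ker] at hx ⊢
  rw [toLin_proj, hx, map_zero]

theorem range_proj_mem {M N : SgrObj B SG} (f : M ⟶ N) (n : ℤ) (x : N.carrier)
    (hx : x ∈ (toLin f).range) : N.proj n x ∈ (toLin f).range := by
  obtain ⟨y, rfl⟩ := hx
  exact ⟨M.proj n y, toLin_proj f n y⟩

/-- The inclusion of the kernel of a homogeneous homomorphism. -/
noncomputable def kerι [IsNoetherianRing B] {M N : SgrObj B SG} (f : M ⟶ N) :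
    M.sub (toLin f).ker (ker_proj_mem f) ⟶ M :=
  ofLin (toLin f).ker.subtype fun _ _ hx => hx

theorem kerι_comp [IsNoetherianRing B] {M N : SgrObj B SG} (f : M ⟶ N) : kerι f ≫ f = 0 :=
  hom_ext fun x => x.2

/-- The projection onto the quotient by the image of a homogeneous homomorphism. -/
noncomputable def cokerπ {M N : SgrObj B SG} (f : M ⟶ N) :
    N ⟶ N.quot (toLin f).range (range_proj_mem f) :=
  ofLin (toLin f).range.mkQ fun _ x hx => ⟨x, hx, rfl⟩

theorem comp_cokerπ {M N : SgrObj B SG} (f : M ⟶ N) : f ≫ cokerπ f = 0 :=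
  hom_ext fun x => (Submodule.Quotient.mk_eq_zero _).2 ⟨x, rfl⟩

theorem toLin_apply_eq_zero {M N P : SgrObj B SG} {f : M ⟶ N} {g : N ⟶ P} (w : f ≫ g = 0)
    (x : M.carrier) : toLin g (toLin f x) = 0 :=
  LinearMap.congr_fun (congrArg toLin w) x

theorem injective_of_mono [IsNoetherianRing B] {M N : SgrObj B SG} (f : M ⟶ N) [Mono f] :
    Function.Injective (toLin f) := by
  rw [← LinearMap.ker_eq_bot, eq_bot_iff]
  intro x hx
  have h : kerι f = 0 := zero_of_comp_mono f (kerι_comp f)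
  exact LinearMap.congr_fun (congrArg toLin h) ⟨x, hx⟩

theorem surjective_of_epi {M N : SgrObj B SG} (f : M ⟶ N) [Epi f] :
    Function.Surjective (toLin f) := by
  intro x
  have h : cokerπ f = 0 := zero_of_epi_comp f (comp_cokerπ f)
  exact (Submodule.Quotient.mk_eq_zero _).1 (LinearMap.congr_fun (congrArg toLin h) x)

/-- An injective homogeneous homomorphism is a kernel of every morphism whose linear kernel is its
image. -/
noncomputable def isLimitKernelFork {M N P : SgrObj B SG} {f : M ⟶ N} {g : N ⟶ P} (w : f ≫ g = 0)
    (hf : Function.Injective (toLin f)) (hg : (toLin g).ker ≤ (toLin f).range) :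
    IsLimit (KernelFork.ofι f w) :=
  have fac {Q : SgrObj B SG} (k : Q ⟶ N) (hk : k ≫ g = 0) (x : Q.carrier) :
      toLin f ((LinearEquiv.ofInjective _ hf).symm
        ⟨toLin k x, hg (toLin_apply_eq_zero hk x)⟩) = toLin k x :=
    congrArg Subtype.val ((LinearEquiv.ofInjective _ hf).apply_symm_apply _)
  KernelFork.IsLimit.ofι f w
    (fun {Q} k hk => ofLin ((LinearEquiv.ofInjective _ hf).symm.toLinearMap.comp
      ((toLin k).codRestrict _ fun x => hg (toLin_apply_eq_zero hk x))) fun n x hx => by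
        have h := M.isGradingProj.mem n ((LinearEquiv.ofInjective _ hf).symm
          ⟨toLin k x, hg (toLin_apply_eq_zero hk x)⟩)
        rwa [hf ((toLin_proj f n _).trans (by
          rw [fac k hk x, N.isGradingProj.apply_of_mem n _ (toLin_mem k n x hx)]))] at h)
    (fun k hk => hom_ext (fac k hk))
    (fun k hk m hm => hom_ext fun x => hf
      ((LinearMap.congr_fun (congrArg toLin hm) x).trans (fac k hk x).symm))

/-- A surjective homogeneous homomorphism is a cokernel of every morphism whose image is its linear
kernel. -/
noncomputable def isColimitCokernelCofork {M N P : SgrObj B SG} {f : M ⟶ N} {g : N ⟶ P}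
    (w : f ≫ g = 0) (hg : Function.Surjective (toLin g)) (hf : (toLin g).ker ≤ (toLin f).range) :
    IsColimit (CokernelCofork.ofπ g w) :=
  have le {Q : SgrObj B SG} (k : N ⟶ Q) (hk : f ≫ k = 0) : (toLin g).ker ≤ (toLin k).ker :=
    hf.trans (by rintro _ ⟨x, rfl⟩; exact toLin_apply_eq_zero hk x)
  have fac {Q : SgrObj B SG} (k : N ⟶ Q) (hk : f ≫ k = 0) (x : N.carrier) :
      (toLin g).ker.liftQ (toLin k) (le k hk)
        (((toLin g).quotKerEquivOfSurjective hg).symm (toLin g x)) = toLin k x := by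
    rw [LinearMap.quotKerEquivOfSurjective_symm_apply]
    rfl
  CokernelCofork.IsColimit.ofπ g w
    (fun {Q} k hk => ofLin (((toLin g).ker.liftQ (toLin k) (le k hk)).comp
      ((toLin g).quotKerEquivOfSurjective hg).symm.toLinearMap) fun n y hy => by
        obtain ⟨x, rfl⟩ := hg y
        rw [← P.isGradingProj.apply_of_mem n _ hy, ← toLin_proj]
        exact (fac k hk _).symm ▸ toLin_mem k n _ (N.isGradingProj.mem n x))
    (fun k hk => hom_ext (fac k hk))
    (fun k hk m hm => hom_ext fun y => by
      obtain ⟨x, rfl⟩ := hg y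
      exact (LinearMap.congr_fun (congrArg toLin hm) x).trans (fac k hk x).symm)

theorem hasKernels [IsNoetherianRing B] : HasKernels (SgrObj B SG) where
  has_limit f := ⟨⟨_, isLimitKernelFork (kerι_comp f) Subtype.val_injective
    (fun x hx => ⟨⟨x, hx⟩, rfl⟩)⟩⟩

theorem hasCokernels : HasCokernels (SgrObj B SG) where
  has_colimit f := ⟨⟨_, isColimitCokernelCofork (comp_cokerπ f) (Submodule.mkQ_surjective _)
    (Submodule.ker_mkQ _).le⟩⟩

theorem isNormalMonoCategory [IsNoetherianRing B] : IsNormalMonoCategory (SgrObj B SG) where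
  normalMonoOfMono f _ := ⟨⟨_, cokerπ f, comp_cokerπ f,
    isLimitKernelFork _ (injective_of_mono f) (Submodule.ker_mkQ _).le⟩⟩

theorem isNormalEpiCategory [IsNoetherianRing B] : IsNormalEpiCategory (SgrObj B SG) where
  normalEpiOfEpi f _ := ⟨⟨_, kerι f, kerι_comp f,
    isColimitCokernelCofork _ (surjective_of_epi f) (fun x hx => ⟨⟨x, hx⟩, rfl⟩)⟩⟩

/-- The direct sum as a binary bicone. -/
noncomputable def prodBicone (M N : SgrObj B SG) : BinaryBicone M N where
  pt := M.prod N
  fst := ofLin (LinearMap.fst B M.carrier N.carrier) fun _ _ hx => hx.1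
  snd := ofLin (LinearMap.snd B M.carrier N.carrier) fun _ _ hx => hx.2
  inl := ofLin (LinearMap.inl B M.carrier N.carrier) fun _ _ hx => ⟨hx, zero_mem _⟩
  inr := ofLin (LinearMap.inr B M.carrier N.carrier) fun _ _ hx => ⟨zero_mem _, hx⟩
  inl_fst := rfl
  inl_snd := rfl
  inr_fst := rfl
  inr_snd := rfl

instance : HasBinaryBiproducts (SgrObj B SG) where
  has_binary_biproduct M N := hasBinaryBiproduct_of_total (prodBicone M N) <| hom_ext fun x =>
    Prod.ext (add_zero x.1) (zero_add x.2)

theorem hasFiniteProducts : HasFiniteProducts (SgrObj B SG) :=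
  hasFiniteProducts_of_has_binary_and_terminal

end SgrObj

/-- If `B` is a left noetherian semi-graded ring, then the category `sgr-B` of finitely
generated semi-graded left `B`-modules with homogeneous `B`-homomorphisms is an abelian
category (in particular it has kernels and cokernels, is normal and conormal, is
additive, and composition is bilinear). -/
theorem sgr_abelian (hB : IsNoetherianRing B) :
    Nonempty (Abelian (SgrObj B SG)) := by
  have := SgrObj.isNormalMonoCategory (SG := SG)
  have := SgrObj.isNormalEpiCategory (SG := SG)
  exact ⟨{ has_finite_products := SgrObj.hasFiniteProducts
           has_kernels := SgrObj.hasKernels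
           has_cokernels := SgrObj.hasCokernels }⟩
end
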